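/- arXiv:1911.02140 — 7 statements merged into one kernel-verified Lean document; each statement's English description precedes it below -/
import Mathlib

section
/- Let F : ℝ → ℝ be continuous and monotone non-decreasing, let N ≥ 2, and for fractions 0 = τ₀ < τ₁ < ... < τ_{N-1} < τ_N = 1 define the 1-Wasserstein approximation error W₁(τ₁, ..., τ_{N-1}) = Σ_{j=0}^{N-1} ∫_{τ_j}^{τ_{j+1}} |F(ω) − F((τ_j + τ_{j+1})/2)| dω. Then for each i with 1 ≤ i ≤ N−1, the partial derivative of W₁ with respect to τ_i exists at every point of the region {0 < τ₁ < ... < τ_{N-1} < 1} and equals 2F(τ_i) − F((τ_i + τ_{i+1})/2) − F((τ_{i-1} + τ_i)/2). -/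
lemma staircase_cell (F : ℝ → ℝ) (hF : Continuous F) (hmono : Monotone F) (a b : ℝ) (hab : a ≤ b) :
    ∫ ω in a..b, |F ω - F ((a + b) / 2)| =
      (∫ x in (0:ℝ)..a, F x) + (∫ x in (0:ℝ)..b, F x) - 2 * ∫ x in (0:ℝ)..((a + b) / 2), F x := by
  have hi : ∀ u v : ℝ, IntervalIntegrable F MeasureTheory.volume u v :=
    fun u v => hF.intervalIntegrable u v
  have hc : Continuous (fun ω => |F ω - F ((a + b) / 2)|) := by fun_prop
  have e1 : ∫ ω in a..((a + b) / 2), |F ω - F ((a + b) / 2)| =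
      ∫ ω in a..((a + b) / 2), (F ((a + b) / 2) - F ω) := by
    apply intervalIntegral.integral_congr
    intro x hx
    rw [Set.uIcc_of_le (by linarith)] at hx
    have := hmono hx.2
    simp only
    rw [abs_of_nonpos (by linarith)]
    ring
  have e2 : ∫ ω in ((a + b) / 2)..b, |F ω - F ((a + b) / 2)| =
      ∫ ω in ((a + b) / 2)..b, (F ω - F ((a + b) / 2)) := by
    apply intervalIntegral.integral_congr
    intro x hx
    rw [Set.uIcc_of_le (by linarith)] at hx
    have := hmono hx.1
    simp only
    rw [abs_of_nonneg (by linarith)]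
  rw [← intervalIntegral.integral_add_adjacent_intervals
    (hc.intervalIntegrable a ((a + b) / 2)) (hc.intervalIntegrable ((a + b) / 2) b), e1, e2,
    intervalIntegral.integral_sub (by simp) (hi _ _),
    intervalIntegral.integral_sub (hi _ _) (by simp),
    ← intervalIntegral.integral_interval_sub_left (hi 0 ((a + b) / 2)) (hi 0 a),
    ← intervalIntegral.integral_interval_sub_left (hi 0 b) (hi 0 ((a + b) / 2))]
  simp only [intervalIntegral.integral_const, smul_eq_mul]
  ring

lemma primitive_deriv (F : ℝ → ℝ) (hF : Continuous F) (x : ℝ) :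
    HasDerivAt (fun t => ∫ y in (0:ℝ)..t, F y) (F x) x :=
  intervalIntegral.integral_hasDerivAt_right (hF.intervalIntegrable _ _)
    hF.aestronglyMeasurable.stronglyMeasurableAtFilter hF.continuousAt

lemma cell_deriv_left (F : ℝ → ℝ) (hF : Continuous F) (hmono : Monotone F) (a b : ℝ)
    (hab : a < b) :
    HasDerivAt (fun t => ∫ ω in t..b, |F ω - F ((t + b) / 2)|) (F a - F ((a + b) / 2)) a := by
  have hm : HasDerivAt (fun t : ℝ => (t + b) / 2) (1 / 2) a :=
    ((hasDerivAt_id a).add_const b).div_const 2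
  have h := (((primitive_deriv F hF a).add_const (∫ x in (0:ℝ)..b, F x)).sub
    (((primitive_deriv F hF ((a + b) / 2)).comp a hm).const_mul 2))
  have h' := h.congr_of_eventuallyEq (f₁ := fun t => ∫ ω in t..b, |F ω - F ((t + b) / 2)|) (by
    filter_upwards [Iio_mem_nhds hab] with t ht
    exact staircase_cell F hF hmono t b (le_of_lt ht))
  exact h'.congr_deriv (by ring)

lemma cell_deriv_right (F : ℝ → ℝ) (hF : Continuous F) (hmono : Monotone F) (a b : ℝ)
    (hab : a < b) :
    HasDerivAt (fun t => ∫ ω in a..t, |F ω - F ((a + t) / 2)|) (F b - F ((a + b) / 2)) b := by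
  have hm : HasDerivAt (fun t : ℝ => (a + t) / 2) (1 / 2) b :=
    ((hasDerivAt_id b).const_add a).div_const 2
  have h := (((primitive_deriv F hF b).const_add (∫ x in (0:ℝ)..a, F x)).sub
    (((primitive_deriv F hF ((a + b) / 2)).comp b hm).const_mul 2))
  have h' := h.congr_of_eventuallyEq (f₁ := fun t => ∫ ω in a..t, |F ω - F ((a + t) / 2)|) (by
    filter_upwards [Ioi_mem_nhds hab] with t ht
    exact staircase_cell F hF hmono a t (le_of_lt ht))
  exact h'.congr_deriv (by ring)

/-- For a continuous, monotone non-decreasing `F : ℝ → ℝ`, `N ≥ 2`, and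
fractions `0 = τ₀ < τ₁ < ... < τ_N = 1`, the 1-Wasserstein approximation error
`W₁ τ = ∑ j, ∫ ω in τ j..τ (j+1), |F ω - F ((τ j + τ (j+1))/2)|`
has, for each `1 ≤ i ≤ N - 1`, a partial derivative with respect to `τ i` at every point of
the region `0 < τ₁ < ... < τ_{N-1} < 1`, equal to
`2 F (τ i) - F ((τ i + τ (i+1))/2) - F ((τ (i-1) + τ i)/2)`. -/
theorem hasDerivAt_wasserstein_partial
    (F : ℝ → ℝ) (hF : Continuous F) (hmono : Monotone F)
    (N : ℕ) (hN : 2 ≤ N) (τ : ℕ → ℝ) (h0 : τ 0 = 0) (h1 : τ N = 1)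
    (hinc : ∀ j < N, τ j < τ (j + 1))
    (i : ℕ) (hi1 : 1 ≤ i) (hi2 : i ≤ N - 1) :
    HasDerivAt
      (fun t : ℝ =>
        ∑ j ∈ Finset.range N,
          ∫ ω in (Function.update τ i t) j..(Function.update τ i t) (j + 1),
            |F ω - F (((Function.update τ i t) j + (Function.update τ i t) (j + 1)) / 2)|)
      (2 * F (τ i) - F ((τ i + τ (i + 1)) / 2) - F ((τ (i - 1) + τ i) / 2))
      (τ i) := by
  obtain ⟨k, rfl⟩ : ∃ k, i = k + 1 := ⟨i - 1, by omega⟩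
  have key : ∀ j ∈ Finset.range N, HasDerivAt
      (fun t : ℝ =>
          ∫ ω in (Function.update τ (k + 1) t) j..(Function.update τ (k + 1) t) (j + 1),
            |F ω - F (((Function.update τ (k + 1) t) j +
              (Function.update τ (k + 1) t) (j + 1)) / 2)|)
      ((if j = k + 1 then F (τ (k + 1)) - F ((τ (k + 1) + τ (k + 1 + 1)) / 2) else 0) +
        (if j = k then F (τ (k + 1)) - F ((τ k + τ (k + 1)) / 2) else 0)) (τ (k + 1)) := by
    intro j hj
    have hlt := hinc j (Finset.mem_range.mp hj)
    by_cases hA : j = k + 1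
    · subst hA
      simpa using cell_deriv_left F hF hmono _ _ hlt
    · by_cases hB : j = k
      · subst hB
        simpa using cell_deriv_right F hF hmono _ _ hlt
      · have hC : j + 1 ≠ k + 1 := by omega
        simp only [Function.update_of_ne hA, Function.update_of_ne hC, if_neg hA, if_neg hB,
          add_zero]
        exact hasDerivAt_const _ _
  refine (HasDerivAt.fun_sum key).congr_deriv ?_
  have m1 : k + 1 < N := by omega
  have m2 : k < N := by omega
  rw [Finset.sum_add_distrib, Finset.sum_ite_eq', Finset.sum_ite_eq',
    if_pos (Finset.mem_range.mpr m1), if_pos (Finset.mem_range.mpr m2), Nat.add_sub_cancel]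
  ring
end

section
/- Let F : ℝ → ℝ be continuous and monotone non-decreasing, let N ≥ 1, and fix fractions 0 = τ₀ < τ₁ < ... < τ_N = 1. Then for every vector θ = (θ₀, ..., θ_{N-1}) of real numbers, Σ_{i=0}^{N-1} ∫_{τ_i}^{τ_{i+1}} |F(ω) − F((τ_i + τ_{i+1})/2)| dω ≤ Σ_{i=0}^{N-1} ∫_{τ_i}^{τ_{i+1}} |F(ω) − θ_i| dω; i.e., the choice θ_i = F(τ̂_i) with τ̂_i = (τ_i + τ_{i+1})/2 minimizes the 1-Wasserstein error W₁(Z, θ, τ) = Σ_{i=0}^{N-1} ∫_{τ_i}^{τ_{i+1}} |F(ω) − θ_i| dω over all θ. -/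
/-- The midpoint value is optimal on a single interval. -/
lemma midpoint_single (F : ℝ → ℝ) (hF : Continuous F) (hmono : Monotone F)
    (a b t : ℝ) (hab : a < b) :
    (∫ ω in a..b, |F ω - F ((a + b) / 2)|) ≤ ∫ ω in a..b, |F ω - t| := by
  set m := (a + b) / 2 with hm
  have ham : a ≤ m := by rw [hm]; linarith
  have hmb : m ≤ b := by rw [hm]; linarith
  have ci : ∀ c x y : ℝ, IntervalIntegrable (fun ω => |F ω - c|) MeasureTheory.volume x y :=
    fun c x y => (hF.sub continuous_const).abs.intervalIntegrable x y
  have cc : ∀ c x y : ℝ, IntervalIntegrable (fun _ => c) MeasureTheory.volume x y :=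
    fun c x y => continuous_const.intervalIntegrable x y
  have e1 : (∫ ω in a..m, |F ω - F m|) ≤ ∫ ω in a..m, (|F ω - t| + (F m - t)) := by
    refine intervalIntegral.integral_mono_on ham (ci _ _ _) ((ci _ _ _).add (cc _ _ _)) ?_
    intro x hx
    have h := hmono hx.2
    rw [abs_of_nonpos (by linarith)]
    linarith [neg_abs_le (F x - t)]
  have e2 : (∫ ω in m..b, |F ω - F m|) ≤ ∫ ω in m..b, (|F ω - t| - (F m - t)) := by
    refine intervalIntegral.integral_mono_on hmb (ci _ _ _) ((ci _ _ _).sub (cc _ _ _)) ?_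
    intro x hx
    have h := hmono hx.1
    rw [abs_of_nonneg (by linarith)]
    linarith [le_abs_self (F x - t)]
  rw [intervalIntegral.integral_add (ci _ _ _) (cc _ _ _), intervalIntegral.integral_const,
    smul_eq_mul] at e1
  rw [intervalIntegral.integral_sub (ci _ _ _) (cc _ _ _), intervalIntegral.integral_const,
    smul_eq_mul] at e2
  rw [← intervalIntegral.integral_add_adjacent_intervals (ci (F m) a m) (ci (F m) m b),
    ← intervalIntegral.integral_add_adjacent_intervals (ci t a m) (ci t m b)]
  have hw : b - m = m - a := by rw [hm]; ring
  rw [hw] at e2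
  linarith

/-- For a continuous, monotone non-decreasing `F : ℝ → ℝ`, `N ≥ 1`, and
fractions `0 = τ₀ < τ₁ < ... < τ_N = 1`, the choice `θ i = F ((τ i + τ (i+1))/2)` minimizes
the 1-Wasserstein error `∑ i, ∫ ω in τ i..τ (i+1), |F ω - θ i|` over all `θ`. -/
theorem midpoint_values_minimize_wasserstein
    (F : ℝ → ℝ) (hF : Continuous F) (hmono : Monotone F)
    (N : ℕ) (hN : 1 ≤ N) (τ : ℕ → ℝ) (h0 : τ 0 = 0) (h1 : τ N = 1)
    (hinc : ∀ j < N, τ j < τ (j + 1)) (θ : ℕ → ℝ) :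
    (∑ i ∈ Finset.range N, ∫ ω in τ i..τ (i + 1), |F ω - F ((τ i + τ (i + 1)) / 2)|)
      ≤ ∑ i ∈ Finset.range N, ∫ ω in τ i..τ (i + 1), |F ω - θ i| := by
  exact Finset.sum_le_sum fun i hi =>
    midpoint_single F hF hmono _ _ _ (hinc i (Finset.mem_range.mp hi))
end

section
/- Let F : ℝ → ℝ be continuous and monotone non-decreasing, and let a < b be real numbers with midpoint m = (a + b)/2. Then for every real number c, ∫_a^b |F(ω) − F(m)| dω ≤ ∫_a^b |F(ω) − c| dω; i.e., the value F(m) at the midpoint minimizes c ↦ ∫_a^b |F(ω) − c| dω. -/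
/-- For a continuous, monotone non-decreasing `F : ℝ → ℝ` and `a < b` with
midpoint `m = (a + b)/2`, the value `F m` minimizes `c ↦ ∫ ω in a..b, |F ω - c|`. -/
theorem midpoint_value_minimizes_abs_integral
    (F : ℝ → ℝ) (hF : Continuous F) (hmono : Monotone F)
    (a b : ℝ) (hab : a < b) (c : ℝ) :
    (∫ ω in a..b, |F ω - F ((a + b) / 2)|) ≤ ∫ ω in a..b, |F ω - c| := by
  obtain ⟨m, hm⟩ : ∃ m, m = (a + b) / 2 := ⟨_, rfl⟩
  rw [← hm]
  have ham : a ≤ m := by linarith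
  have hmb : m ≤ b := by linarith
  have hi : ∀ d x y : ℝ, IntervalIntegrable (fun ω => |F ω - d|) MeasureTheory.volume x y :=
    fun d x y => (by fun_prop : Continuous fun ω => |F ω - d|).intervalIntegrable x y
  have hk : ∀ d x y : ℝ, IntervalIntegrable (fun _ : ℝ => d) MeasureTheory.volume x y :=
    fun d x y => continuous_const.intervalIntegrable x y
  have h1 : (∫ ω in a..m, |F ω - F m|) ≤ ∫ ω in a..m, (|F ω - c| + (F m - c)) := by
    refine intervalIntegral.integral_mono_on ham (hi _ _ _) ((hi _ _ _).add (hk _ _ _)) ?_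
    intro x hx
    rw [abs_of_nonpos (sub_nonpos.2 (hmono hx.2))]
    linarith [neg_abs_le (F x - c)]
  have h2 : (∫ ω in m..b, |F ω - F m|) ≤ ∫ ω in m..b, (|F ω - c| + (c - F m)) := by
    refine intervalIntegral.integral_mono_on hmb (hi _ _ _) ((hi _ _ _).add (hk _ _ _)) ?_
    intro x hx
    rw [abs_of_nonneg (sub_nonneg.2 (hmono hx.1))]
    linarith [le_abs_self (F x - c)]
  rw [intervalIntegral.integral_add (hi _ _ _) (hk _ _ _), intervalIntegral.integral_const,
    smul_eq_mul] at h1 h2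
  rw [← intervalIntegral.integral_add_adjacent_intervals (hi (F m) a m) (hi (F m) m b),
    ← intervalIntegral.integral_add_adjacent_intervals (hi c a m) (hi c m b)]
  have h3 : b - m = m - a := by linarith
  rw [h3] at h2
  linarith
end

section
/- Let F : ℝ → ℝ be continuous and monotone non-decreasing, and let a be a real number. Define g(t) = ∫_a^t |F(ω) − F((a + t)/2)| dω for t > a. Then for every t > a, g is differentiable at t with derivative g'(t) = F(t) − F((a + t)/2). -/
/-- For a continuous, monotone non-decreasing `F : ℝ → ℝ` and a real `a`,
the function `g t = ∫ ω in a..t, |F ω - F ((a + t)/2)|` is differentiable at every `t > a`,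
with derivative `F t - F ((a + t)/2)`. -/
theorem hasDerivAt_wasserstein_piece_upper_endpoint
    (F : ℝ → ℝ) (hF : Continuous F) (hmono : Monotone F)
    (a t : ℝ) (ht : a < t) :
    HasDerivAt (fun s : ℝ => ∫ ω in a..s, |F ω - F ((a + s) / 2)|)
      (F t - F ((a + t) / 2)) t := by
  have hG : ∀ x, HasDerivAt (fun s : ℝ => ∫ ω in a..s, F ω) (F x) x := fun x =>
    intervalIntegral.integral_hasDerivAt_right (hF.intervalIntegrable _ _)
      hF.aestronglyMeasurable.stronglyMeasurableAtFilter hF.continuousAt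
  have hi : ∀ x y, IntervalIntegrable F MeasureTheory.volume x y :=
    fun x y => hF.intervalIntegrable x y
  have hm : HasDerivAt (fun s : ℝ => (a + s) / 2) (1 / 2) t :=
    ((hasDerivAt_id t).const_add a).div_const 2
  have hc : HasDerivAt (fun s : ℝ => ∫ ω in a..((a + s) / 2), F ω)
      (F ((a + t) / 2) * (1 / 2)) t := by
    have h := HasDerivAt.comp t (hG ((a + t) / 2)) hm
    exact h
  have hd := (hG t).sub (hc.const_mul 2)
  have he : F t - 2 * (F ((a + t) / 2) * (1 / 2)) = F t - F ((a + t) / 2) := by ring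
  rw [he] at hd
  refine hd.congr_of_eventuallyEq ?_
  filter_upwards [lt_mem_nhds ht] with s hs
  have hcont : Continuous fun ω => |F ω - F ((a + s) / 2)| := by fun_prop
  have h1 : ∫ ω in a..((a + s) / 2), |F ω - F ((a + s) / 2)|
      = ∫ ω in a..((a + s) / 2), (F ((a + s) / 2) - F ω) := by
    apply intervalIntegral.integral_congr
    intro ω hω
    rw [Set.uIcc_of_le (by linarith)] at hω
    have := hmono hω.2
    simp only
    rw [abs_of_nonpos (by linarith)]
    ring
  have h2 : ∫ ω in ((a + s) / 2)..s, |F ω - F ((a + s) / 2)|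
      = ∫ ω in ((a + s) / 2)..s, (F ω - F ((a + s) / 2)) := by
    apply intervalIntegral.integral_congr
    intro ω hω
    rw [Set.uIcc_of_le (by linarith)] at hω
    have := hmono hω.1
    simp only
    rw [abs_of_nonneg (by linarith)]
  have h3 := intervalIntegral.integral_add_adjacent_intervals (hi a ((a + s) / 2))
    (hi ((a + s) / 2) s)
  simp only [Pi.sub_apply]
  rw [← intervalIntegral.integral_add_adjacent_intervals
    (hcont.intervalIntegrable a ((a + s) / 2)) (hcont.intervalIntegrable ((a + s) / 2) s), h1, h2,
    intervalIntegral.integral_sub (by simp) (hi _ _),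
    intervalIntegral.integral_sub (hi _ _) (by simp), ← h3]
  simp only [intervalIntegral.integral_const, smul_eq_mul]
  ring
end

section
/- Let F : ℝ → ℝ be continuous and monotone non-decreasing, and let b be a real number. Define g(t) = ∫_t^b |F(ω) − F((t + b)/2)| dω for t < b. Then for every t < b, g is differentiable at t with derivative g'(t) = F(t) − F((t + b)/2). -/
/-- For a continuous, monotone non-decreasing `F : ℝ → ℝ` and a real `b`,
the function `g t = ∫ ω in t..b, |F ω - F ((t + b)/2)|` is differentiable at every `t < b`,
with derivative `F t - F ((t + b)/2)`. -/
theorem hasDerivAt_wasserstein_piece_lower_endpoint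
    (F : ℝ → ℝ) (hF : Continuous F) (hmono : Monotone F)
    (b t : ℝ) (ht : t < b) :
    HasDerivAt (fun s : ℝ => ∫ ω in s..b, |F ω - F ((s + b) / 2)|)
      (F t - F ((t + b) / 2)) t := by
  have hi : ∀ x y : ℝ, IntervalIntegrable F MeasureTheory.volume x y :=
    fun x y => hF.intervalIntegrable x y
  have hG : ∀ x : ℝ, HasDerivAt (fun u : ℝ => ∫ ω in (0:ℝ)..u, F ω) (F x) x :=
    fun x => hF.integral_hasStrictDerivAt 0 x |>.hasDerivAt
  have hm : HasDerivAt (fun s : ℝ => (s + b) / 2) (1 / 2) t :=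
    ((hasDerivAt_id t).add_const b).div_const 2
  have hcomp : HasDerivAt (fun s : ℝ => ∫ ω in (0:ℝ)..((s + b) / 2), F ω)
      (F ((t + b) / 2) * (1 / 2)) t :=
    HasDerivAt.comp (h₂ := fun u : ℝ => ∫ ω in (0:ℝ)..u, F ω) t (hG ((t + b) / 2)) hm
  have key : HasDerivAt (fun s : ℝ => (∫ ω in (0:ℝ)..b, F ω)
      - 2 * (∫ ω in (0:ℝ)..((s + b) / 2), F ω) + ∫ ω in (0:ℝ)..s, F ω)
      (F t - F ((t + b) / 2)) t := by
    have h := ((hcomp.const_mul 2).const_sub (∫ ω in (0:ℝ)..b, F ω)).add (hG t)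
    have e : -(2 * (F ((t + b) / 2) * (1 / 2))) + F t = F t - F ((t + b) / 2) := by ring
    rw [e] at h
    exact h
  refine key.congr_of_eventuallyEq ?_
  filter_upwards [Iio_mem_nhds ht] with s hs
  have hs' : s < b := hs
  have h1 : s ≤ (s + b) / 2 := by linarith
  have h2 : (s + b) / 2 ≤ b := by linarith
  have hc : Continuous fun ω => |F ω - F ((s + b) / 2)| := by fun_prop
  rw [← intervalIntegral.integral_add_adjacent_intervals
    (hc.intervalIntegrable s ((s + b) / 2)) (hc.intervalIntegrable ((s + b) / 2) b)]
  have e1 : ∫ ω in s..((s + b) / 2), |F ω - F ((s + b) / 2)|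
      = ∫ ω in s..((s + b) / 2), (F ((s + b) / 2) - F ω) := by
    apply intervalIntegral.integral_congr
    intro ω hω
    rw [Set.uIcc_of_le h1] at hω
    have := hmono hω.2
    simp only
    rw [abs_of_nonpos (by linarith)]
    ring
  have e2 : ∫ ω in ((s + b) / 2)..b, |F ω - F ((s + b) / 2)|
      = ∫ ω in ((s + b) / 2)..b, (F ω - F ((s + b) / 2)) := by
    apply intervalIntegral.integral_congr
    intro ω hω
    rw [Set.uIcc_of_le h2] at hω
    have := hmono hω.1
    simp only
    rw [abs_of_nonneg (by linarith)]
  rw [e1, e2, intervalIntegral.integral_sub (by simp) (hi _ _),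
    intervalIntegral.integral_sub (hi _ _) (by simp),
    ← intervalIntegral.integral_interval_sub_left (hi 0 ((s + b) / 2)) (hi 0 s),
    ← intervalIntegral.integral_interval_sub_left (hi 0 b) (hi 0 ((s + b) / 2))]
  simp only [intervalIntegral.integral_const, smul_eq_mul]
  ring
end

section
/- Let F : ℝ → ℝ be continuous and monotone non-decreasing, let a be a real number, and let t₀ > a be such that F is differentiable at m₀ = (a + t₀)/2. Then the function t ↦ ∫_a^{(a+t)/2} (F((a + t)/2) − F(ω)) dω is differentiable at t₀ with derivative ((t₀ − a)/4) · F'(m₀). -/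
/-- For a continuous, monotone non-decreasing `F : ℝ → ℝ`, a real `a`, and
`t₀ > a` such that `F` has derivative `d` at the midpoint `m₀ = (a + t₀)/2`, the function
`t ↦ ∫ ω in a..((a + t)/2), (F ((a + t)/2) - F ω)` is differentiable at `t₀` with derivative
`((t₀ - a)/4) * d`. -/
theorem hasDerivAt_lower_half_piece
    (F : ℝ → ℝ) (hF : Continuous F) (hmono : Monotone F)
    (a t₀ : ℝ) (ht : a < t₀) (d : ℝ) (hd : HasDerivAt F d ((a + t₀) / 2)) :
    HasDerivAt (fun t : ℝ => ∫ ω in a..((a + t) / 2), (F ((a + t) / 2) - F ω))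
      ((t₀ - a) / 4 * d) t₀ := by
  have hm : HasDerivAt (fun t : ℝ => (a + t) / 2) (1 / 2) t₀ :=
    ((hasDerivAt_id t₀).const_add a).div_const 2
  have hG : HasDerivAt (fun m : ℝ => (m - a) * F m - ∫ ω in a..m, F ω)
      (1 * F ((a + t₀) / 2) + ((a + t₀) / 2 - a) * d - F ((a + t₀) / 2)) ((a + t₀) / 2) :=
    (((hasDerivAt_id _).sub_const a).mul hd).sub (hF.integral_hasStrictDerivAt a _).hasDerivAt
  have hc := HasDerivAt.comp t₀ hG hm
  have hfun : (fun t : ℝ => ∫ ω in a..((a + t) / 2), (F ((a + t) / 2) - F ω)) =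
      (fun m : ℝ => (m - a) * F m - ∫ ω in a..m, F ω) ∘ (fun t : ℝ => (a + t) / 2) := by
    funext t
    simp only [Function.comp]
    rw [intervalIntegral.integral_sub (by simp) (hF.intervalIntegrable _ _)]
    simp
  rw [hfun]
  exact hc.congr_deriv (by ring)
end

section
/- Let F : ℝ → ℝ be continuous and monotone non-decreasing, let N ≥ 2, and define W₁(τ₁, ..., τ_{N-1}) = Σ_{i=0}^{N-1} ∫_{τ_i}^{τ_{i+1}} |F(ω) − F((τ_i + τ_{i+1})/2)| dω with τ₀ = 0 and τ_N = 1. If τ* = (τ₁*, ..., τ_{N-1}*) with 0 < τ₁* < ... < τ_{N-1}* < 1 is a local minimum of W₁, then for every i with 1 ≤ i ≤ N−1, 2F(τ_i*) = F((τ_{i-1}* + τ_i*)/2) + F((τ_i* + τ_{i+1}*)/2). -/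
theorem aux_integral (F : ℝ → ℝ) (hF : Continuous F) (hmono : Monotone F) (a b : ℝ) (hab : a ≤ b) :
    ∫ ω in a..b, |F ω - F ((a + b) / 2)| =
      (∫ ω in (0:ℝ)..a, F ω) + (∫ ω in (0:ℝ)..b, F ω) - 2 * ∫ ω in (0:ℝ)..((a + b) / 2), F ω := by
  have hi : ∀ u v : ℝ, IntervalIntegrable F MeasureTheory.volume u v :=
    fun u v => hF.intervalIntegrable u v
  have hc : Continuous fun ω => |F ω - F ((a + b) / 2)| := by fun_prop
  rw [← intervalIntegral.integral_add_adjacent_intervals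
    (hc.intervalIntegrable a ((a + b) / 2)) (hc.intervalIntegrable ((a + b) / 2) b)]
  have e1 : ∫ ω in a..((a + b) / 2), |F ω - F ((a + b) / 2)| =
      ∫ ω in a..((a + b) / 2), (F ((a + b) / 2) - F ω) := by
    apply intervalIntegral.integral_congr
    intro x hx
    rw [Set.uIcc_of_le (by linarith)] at hx
    have := hmono hx.2
    simp only
    rw [abs_of_nonpos (by linarith)]
    ring
  have e2 : ∫ ω in ((a + b) / 2)..b, |F ω - F ((a + b) / 2)| =
      ∫ ω in ((a + b) / 2)..b, (F ω - F ((a + b) / 2)) := by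
    apply intervalIntegral.integral_congr
    intro x hx
    rw [Set.uIcc_of_le (by linarith)] at hx
    have := hmono hx.1
    simp only
    rw [abs_of_nonneg (by linarith)]
  rw [e1, e2, intervalIntegral.integral_sub (by simp) (hi _ _),
    intervalIntegral.integral_sub (hi _ _) (by simp)]
  have s1 := intervalIntegral.integral_add_adjacent_intervals (hi 0 a) (hi a ((a + b) / 2))
  have s2 := intervalIntegral.integral_add_adjacent_intervals
    (hi 0 ((a + b) / 2)) (hi ((a + b) / 2) b)
  simp only [intervalIntegral.integral_const, smul_eq_mul]
  rw [← s2, ← s1]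
  ring

theorem aux_deriv (F : ℝ → ℝ) (hF : Continuous F) (hmono : Monotone F) (a b c : ℝ)
    (hab : a < b) (hbc : b < c)
    (h : IsLocalMin (fun x => (∫ ω in a..x, |F ω - F ((a + x) / 2)|) +
      ∫ ω in x..c, |F ω - F ((x + c) / 2)|) b) :
    2 * F b = F ((a + b) / 2) + F ((b + c) / 2) := by
  have hG : ∀ x, HasDerivAt (fun x => ∫ ω in (0:ℝ)..x, F ω) (F x) x :=
    fun x => (hF.integral_hasStrictDerivAt 0 x).hasDerivAt
  have l1 : HasDerivAt (fun x : ℝ => (a + x) / 2) (1 / 2) b :=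
    ((hasDerivAt_id b).const_add a).div_const 2
  have l2 : HasDerivAt (fun x : ℝ => (x + c) / 2) (1 / 2) b :=
    ((hasDerivAt_id b).add_const c).div_const 2
  have g1 := (hG ((a + b) / 2)).comp b l1
  have g2 := (hG ((b + c) / 2)).comp b l2
  have d := ((((hG b).const_add (∫ ω in (0:ℝ)..a, F ω)).sub (g1.const_mul 2))).add
    ((((hG b).add_const (∫ ω in (0:ℝ)..c, F ω)).sub (g2.const_mul 2)))
  have d' := d.congr_of_eventuallyEq (f₁ := (fun x => (∫ ω in a..x, |F ω - F ((a + x) / 2)|) +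
      ∫ ω in x..c, |F ω - F ((x + c) / 2)|)) (by
    filter_upwards [Ioo_mem_nhds hab hbc] with x hx
    rw [aux_integral F hF hmono a x hx.1.le, aux_integral F hF hmono x c hx.2.le]
    rfl)
  have := h.hasDerivAt_eq_zero d'
  linarith


/-- For a continuous, monotone non-decreasing `F : ℝ → ℝ` and `N ≥ 2`, if
`τ* = (τ₁*, ..., τ_{N-1}*)` with `0 < τ₁* < ... < τ_{N-1}* < 1` is a local minimum of
`W₁(τ₁, ..., τ_{N-1}) = ∑ i, ∫ ω in τ i..τ (i+1), |F ω - F ((τ i + τ (i+1))/2)|`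
(where `τ₀ = 0` and `τ_N = 1` are held fixed), then for every `1 ≤ i ≤ N - 1`,
`2 F (τ i*) = F ((τ (i-1)* + τ i*)/2) + F ((τ i* + τ (i+1)*)/2)`. -/
theorem local_min_first_order_condition
    (F : ℝ → ℝ) (hF : Continuous F) (hmono : Monotone F)
    (N : ℕ) (hN : 2 ≤ N) (τ : ℕ → ℝ) (h0 : τ 0 = 0) (h1 : τ N = 1)
    (hinc : ∀ j < N, τ j < τ (j + 1))
    (hmin : IsLocalMin
      (fun σ : ℕ → ℝ =>
        ∑ j ∈ Finset.range N,
          ∫ ω in (fun k => if k = 0 then (0 : ℝ) else if k = N then 1 else σ k) j..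
                 (fun k => if k = 0 then (0 : ℝ) else if k = N then 1 else σ k) (j + 1),
            |F ω - F (((fun k => if k = 0 then (0 : ℝ) else if k = N then 1 else σ k) j
                + (fun k => if k = 0 then (0 : ℝ) else if k = N then 1 else σ k) (j + 1)) / 2)|)
      τ)
    (i : ℕ) (hi1 : 1 ≤ i) (hi2 : i ≤ N - 1) :
    2 * F (τ i) = F ((τ (i - 1) + τ i) / 2) + F ((τ i + τ (i + 1)) / 2) := by

  obtain ⟨m, rfl⟩ : ∃ m, i = m + 1 := ⟨i - 1, by omega⟩
  simp only [Nat.add_sub_cancel]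
  apply aux_deriv F hF hmono _ _ _ (hinc m (by omega)) (hinc (m + 1) (by omega))
  have hu : Continuous fun x : ℝ => Function.update τ (m + 1) x :=
    continuous_const.update (m + 1) continuous_id
  have hmin' := IsLocalMin.comp_continuous (g := fun x : ℝ => Function.update τ (m + 1) x)
    (b := τ (m + 1)) (by rw [Function.update_eq_self]; exact hmin) hu.continuousAt
  have hP : ∀ x : ℝ, ∀ k : ℕ, (if k = 0 then (0 : ℝ) else if k = N then 1 else
      Function.update τ (m + 1) x k) = Function.update τ (m + 1) x k := by
    intro x k
    split_ifs with hk hk'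
    · subst hk
      rw [Function.update_of_ne (by omega), h0]
    · subst hk'
      rw [Function.update_of_ne (by omega), h1]
    · rfl
  simp only [Function.comp_def, hP] at hmin'
  have key : ∀ x : ℝ, ∑ j ∈ Finset.range N,
      ∫ ω in (Function.update τ (m + 1) x j)..(Function.update τ (m + 1) x (j + 1)),
        |F ω - F ((Function.update τ (m + 1) x j + Function.update τ (m + 1) x (j + 1)) / 2)| =
      ((∫ ω in (τ m)..x, |F ω - F ((τ m + x) / 2)|) +
      ∫ ω in x..(τ (m + 1 + 1)), |F ω - F ((x + τ (m + 1 + 1)) / 2)|) +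
      ∑ j ∈ ((Finset.range N).erase m).erase (m + 1),
        ∫ ω in (τ j)..(τ (j + 1)), |F ω - F ((τ j + τ (j + 1)) / 2)| := by
    intro x
    rw [← Finset.add_sum_erase (Finset.range N) _ (Finset.mem_range.2 (by omega : m < N)),
      ← Finset.add_sum_erase ((Finset.range N).erase m) _
        (Finset.mem_erase.2 ⟨by omega, Finset.mem_range.2 (by omega : m + 1 < N)⟩), ← add_assoc]
    congr 1
    · rw [Function.update_self, Function.update_of_ne (by omega), Function.update_of_ne (by omega)]
    · apply Finset.sum_congr rfl
      intro j hj
      simp only [Finset.mem_erase] at hj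
      rw [Function.update_of_ne (by omega), Function.update_of_ne (by omega)]
  simp only [key] at hmin'
  filter_upwards [hmin'] with x hx
  linarith
end
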